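/- Let Γ be a subgroup of SL(2,ℝ) commensurable with SL(2,ℤ) whose cusp ∞ has width N, let χ be a finite-order character of Γ, and let φ: ℍ → ℂ be holomorphic, N-periodic and holomorphic at ∞, with (cz+d)^{-2} φ((az+b)/(cz+d)) = φ(z) + α c/(cz+d) for all (a b; c d) ∈ Γ, α ≠ 0. Let f = f₀ + φ f₁ with f₀ ∈ M_k(Γ,χ), f₁ ∈ M_{k-2}(Γ,χ), f₁ ≢ 0, and define W_f and Q_f as in the context. Then: (i) Q_f extends to a meromorphic function on ℍ all of whose poles have order at most 2, and Q_f((az+b)/(cz+d)) = (cz+d)⁴ Q_f(z) for all (a b; c d) ∈ Γ (so Q_f is a meromorphic modular form of weight 4 with trivial character on Γ); (ii) Q_f is holomorphic at ∞ (its q_N-expansion has no negative-power terms), and N² · lim_{Im z → ∞} Q_f(z) = κ∞², where κ∞ = ( v_∞(f) − min(v_∞(f), v_∞(f₁)) )/2; in particular 2κ∞ is a nonnegative integer. -/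

import Mathlib

noncomputable section

open Complex Matrix Filter Topology

abbrev SL2R := Matrix.SpecialLinearGroup (Fin 2) ℝ
abbrev SL2Z := Matrix.SpecialLinearGroup (Fin 2) ℤ

/-- The upper half-plane, as a subset of `ℂ`. -/
def UHP : Set ℂ := {z : ℂ | 0 < z.im}

/-- The embedding of `SL(2,ℤ)` into `SL(2,ℝ)`. -/
def toR : SL2Z →* SL2R := Matrix.SpecialLinearGroup.map (Int.castRingHom ℝ)

/-- `SL(2,ℤ)` as a subgroup of `SL(2,ℝ)`. -/
def SL2ZR : Subgroup SL2R := Subgroup.map toR ⊤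

/-- Möbius action of a real matrix on a complex number. -/
def moeb (γ : SL2R) (z : ℂ) : ℂ :=
  ((γ.1 0 0 : ℂ) * z + (γ.1 0 1 : ℂ)) / ((γ.1 1 0 : ℂ) * z + (γ.1 1 1 : ℂ))

/-- The automorphy factor `cz + d`. -/
def jfac (γ : SL2R) (z : ℂ) : ℂ := (γ.1 1 0 : ℂ) * z + (γ.1 1 1 : ℂ)

/-- A holomorphic modular form of weight `k` and character `χ` on `Γ ≤ SL(2,ℝ)`
(for `Γ` commensurable with `SL(2,ℤ)`): holomorphic on `ℍ`, satisfying the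
transformation law, and holomorphic (bounded) at every cusp. -/
structure IsModularForm (Γ : Subgroup SL2R) (χ : SL2R → ℂ) (k : ℤ) (f : ℂ → ℂ) : Prop where
  holo : DifferentiableOn ℂ f UHP
  transform : ∀ γ ∈ Γ, ∀ z ∈ UHP, f (moeb γ z) = χ γ * jfac γ z ^ k * f z
  bdd_at_cusps : ∀ σ : SL2Z, ∃ C : ℝ, ∀ z ∈ UHP, 1 ≤ z.im →
    ‖jfac (toR σ) z ^ (-k) * f (moeb (toR σ) z)‖ ≤ C

/-- A finite-order character of `Γ`. -/
def IsCharacter (Γ : Subgroup SL2R) (χ : SL2R → ℂ) : Prop :=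
  (∀ γ ∈ Γ, ∀ δ ∈ Γ, χ (γ * δ) = χ γ * χ δ) ∧
    ∃ n : ℕ, 0 < n ∧ ∀ γ ∈ Γ, χ γ ^ n = 1

/-- `φ` is quasimodular of weight 2 and depth 1 on `Γ`, with constant `α`:
`(cz+d)⁻² φ(γz) = φ(z) + α c/(cz+d)`. -/
def IsQuasiWt2 (Γ : Subgroup SL2R) (α : ℂ) (φ : ℂ → ℂ) : Prop :=
  ∀ γ ∈ Γ, ∀ z ∈ UHP,
    (jfac γ z)⁻¹ ^ 2 * φ (moeb γ z) = φ z + α * (γ.1 1 0 : ℂ) / jfac γ z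

/-- `f` has vanishing order `ν` at the cusp `∞`, with respect to `q_N = e^{2πiz/N}`:
`q_N^{-ν}·f(z)` tends to a nonzero constant as `Im z → ∞`. -/
def VOrder (N : ℝ) (f : ℂ → ℂ) (ν : ℝ) : Prop :=
  ∃ c : ℂ, c ≠ 0 ∧ ∀ ε : ℝ, 0 < ε → ∃ Y : ℝ, ∀ z : ℂ, Y ≤ z.im →
    ‖Complex.exp (-(2 * Real.pi * Complex.I * (ν : ℂ) * z / (N : ℂ))) * f z - c‖ < ε


/-- The translation matrix `(1 t; 0 1)` in `SL(2,ℝ)`. -/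
def upperTri (t : ℝ) : SL2R := ⟨!![1, t; 0, 1], by norm_num [Matrix.det_fin_two_of]⟩

/-- The cusp `∞` of `Γ` has width `N`. -/
def HasWidth (Γ : Subgroup SL2R) (N : ℝ) : Prop :=
  0 < N ∧ upperTri N ∈ Γ ∧
    ∀ γ ∈ Γ, γ.1 1 0 = 0 → ∃ m : ℤ, γ.1 0 1 = γ.1 0 0 * (m * N)

/-- The expression `Q_f = -(1/4π²)[f″/f - (f′/f)(W′/W) + (3/4)(W′/W)² - (1/2)(W″/W)]`,
i.e. formally `-(1/4π²)·g″/g` for `g = f/√W`. -/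
def Qformula (f W : ℂ → ℂ) (z : ℂ) : ℂ :=
  -(1 / (4 * (Real.pi : ℂ) ^ 2)) *
    (deriv (deriv f) z / f z - (deriv f z / f z) * (deriv W z / W z)
      + (3 / 4) * (deriv W z / W z) ^ 2 - (1 / 2) * (deriv (deriv W) z / W z))


lemma UHP_open : IsOpen UHP := isOpen_lt continuous_const Complex.continuous_im

lemma jfac_ne (γ : SL2R) {z : ℂ} (hz : z ∈ UHP) : jfac γ z ≠ 0 := by
  intro h
  have hz' : 0 < z.im := hz
  have hd := γ.2
  rw [Matrix.det_fin_two] at hd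
  have him := congrArg Complex.im h
  have hre := congrArg Complex.re h
  simp [jfac] at him hre
  have hc : γ.1 1 0 = 0 := by
    rcases him with h | h
    · exact h
    · exact absurd h hz'.ne'
  rw [hc] at hre hd
  have hd0 : γ.1 1 1 = 0 := by simpa using hre
  rw [hd0] at hd
  simp at hd

lemma det_c (γ : SL2R) : (γ.1 0 0 : ℂ) * γ.1 1 1 - γ.1 0 1 * γ.1 1 0 = 1 := by
  have hd := γ.2
  rw [Matrix.det_fin_two] at hd
  exact_mod_cast hd

lemma moeb_mem (γ : SL2R) {z : ℂ} (hz : z ∈ UHP) : moeb γ z ∈ UHP := by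
  have hz' : 0 < z.im := hz
  have hj := jfac_ne γ hz
  have hd := γ.2
  rw [Matrix.det_fin_two] at hd
  show 0 < (moeb γ z).im
  have : (moeb γ z).im = z.im / Complex.normSq (jfac γ z) := by
    unfold moeb
    rw [Complex.div_im]
    change _ / Complex.normSq (jfac γ z) - _ / Complex.normSq (jfac γ z) = _
    rw [← sub_div]
    congr 1
    simp
    linear_combination z.im * hd
  rw [this]
  exact div_pos hz' (Complex.normSq_pos.2 hj)

lemma jfac_deriv (γ : SL2R) (z : ℂ) : HasDerivAt (jfac γ) (γ.1 1 0 : ℂ) z := by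
  unfold jfac
  simpa using ((hasDerivAt_id z).const_mul (γ.1 1 0 : ℂ)).add_const (γ.1 1 1 : ℂ)

lemma moeb_deriv (γ : SL2R) {z : ℂ} (hz : z ∈ UHP) :
    HasDerivAt (moeb γ) ((jfac γ z ^ 2)⁻¹) z := by
  have hj := jfac_ne γ hz
  have h1 : HasDerivAt (fun z : ℂ => (γ.1 0 0 : ℂ) * z + (γ.1 0 1 : ℂ)) (γ.1 0 0 : ℂ) z := by
    simpa using ((hasDerivAt_id z).const_mul (γ.1 0 0 : ℂ)).add_const (γ.1 0 1 : ℂ)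
  have h2 := h1.div (jfac_deriv γ z) hj
  refine h2.congr_deriv ?_
  rw [div_eq_iff (pow_ne_zero 2 hj), inv_mul_cancel₀ (pow_ne_zero 2 hj)]
  unfold jfac
  linear_combination det_c γ

lemma diffAt {h : ℂ → ℂ} (hh : DifferentiableOn ℂ h UHP) {z : ℂ} (hz : z ∈ UHP) :
    DifferentiableAt ℂ h z := (hh z hz).differentiableAt (UHP_open.mem_nhds hz)

lemma diffDeriv {h : ℂ → ℂ} (hh : DifferentiableOn ℂ h UHP) :
    DifferentiableOn ℂ (deriv h) UHP := hh.deriv UHP_open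

/-- chain rule under the Moebius map -/
lemma chain1 (γ : SL2R) {h F F' : ℂ → ℂ} (hh : DifferentiableOn ℂ h UHP)
    (hF : ∀ z ∈ UHP, h (moeb γ z) = F z) (hF' : ∀ z ∈ UHP, HasDerivAt F (F' z) z)
    {z : ℂ} (hz : z ∈ UHP) : deriv h (moeb γ z) = jfac γ z ^ 2 * F' z := by
  have h1 := ((diffAt hh (moeb_mem γ hz)).hasDerivAt).comp z (moeb_deriv γ hz)
  have h2 : HasDerivAt F (deriv h (moeb γ z) * (jfac γ z ^ 2)⁻¹) z := by
    refine h1.congr_of_eventuallyEq ?_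
    filter_upwards [UHP_open.mem_nhds hz] with w hw
    exact (hF w hw).symm
  have h3 := h2.unique (hF' z hz)
  rw [← h3]
  field_simp [jfac_ne γ hz]

lemma zpowH (γ : SL2R) (C : ℂ) (m : ℤ) {H : ℂ → ℂ} {H' z : ℂ} (hz : z ∈ UHP)
    (hH : HasDerivAt H H' z) :
    HasDerivAt (fun z => C * jfac γ z ^ m * H z)
      (C * jfac γ z ^ m * (H' + m * ((γ.1 1 0 : ℂ) / jfac γ z) * H z)) z := by
  have hj := jfac_ne γ hz
  have h1 := (hasDerivAt_zpow m (jfac γ z) (Or.inl hj)).comp z (jfac_deriv γ z)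
  have h2 := (h1.const_mul C).mul hH
  refine h2.congr_deriv ?_
  simp only [Function.comp]
  rw [zpow_sub_one₀ hj]
  field_simp
  ring

lemma tr1 (γ : SL2R) (C : ℂ) (m : ℤ) {h H : ℂ → ℂ} (hh : DifferentiableOn ℂ h UHP)
    (hH : DifferentiableOn ℂ H UHP)
    (hF : ∀ z ∈ UHP, h (moeb γ z) = C * jfac γ z ^ m * H z) {z : ℂ} (hz : z ∈ UHP) :
    deriv h (moeb γ z) = C * jfac γ z ^ m * jfac γ z ^ 2 *
      (deriv H z + m * ((γ.1 1 0 : ℂ) / jfac γ z) * H z) := by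
  rw [chain1 γ hh hF (fun z hz => zpowH γ C m hz (diffAt hH hz).hasDerivAt) hz]
  ring

lemma tr2 (γ : SL2R) (C : ℂ) (m : ℤ) {h H : ℂ → ℂ} (hh : DifferentiableOn ℂ h UHP)
    (hH : DifferentiableOn ℂ H UHP)
    (hF : ∀ z ∈ UHP, h (moeb γ z) = C * jfac γ z ^ m * H z) {z : ℂ} (hz : z ∈ UHP) :
    deriv (deriv h) (moeb γ z) = C * jfac γ z ^ m * jfac γ z ^ 4 *
      (deriv (deriv H) z + 2 * (m + 1) * ((γ.1 1 0 : ℂ) / jfac γ z) * deriv H z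
        + m * (m + 1) * ((γ.1 1 0 : ℂ) / jfac γ z) ^ 2 * H z) := by
  have hj := jfac_ne γ hz
  have hd : ∀ z ∈ UHP, deriv h (moeb γ z) = C * jfac γ z ^ (m + 1) *
      (jfac γ z * deriv H z + m * (γ.1 1 0 : ℂ) * H z) := by
    intro w hw
    have hj := jfac_ne γ hw
    rw [tr1 γ C m hh hH hF hw, zpow_add_one₀ hj]
    field_simp
  rw [chain1 γ (diffDeriv hh) hd (fun z hz => zpowH γ C (m + 1) hz
    (((jfac_deriv γ z).mul (diffAt (diffDeriv hH) hz).hasDerivAt).add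
      (((diffAt hH hz).hasDerivAt).const_mul (m * (γ.1 1 0 : ℂ))))) hz]
  rw [zpow_add_one₀ hj]
  push_cast
  field_simp
  ring

/-- The filter `Im z → ∞`. -/
def linf : Filter ℂ := Filter.comap Complex.im Filter.atTop

lemma tendsto_linf {h : ℂ → ℂ} {c : ℂ} : Tendsto h linf (𝓝 c) ↔
    ∀ ε : ℝ, 0 < ε → ∃ Y : ℝ, ∀ z : ℂ, Y ≤ z.im → ‖h z - c‖ < ε := by
  have hb : linf.HasBasis (fun _ : ℝ => True) (fun Y => Complex.im ⁻¹' (Set.Ici Y)) :=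
    Filter.atTop_basis.comap _
  rw [hb.tendsto_iff Metric.nhds_basis_ball]
  simp [dist_eq_norm]

lemma linf_UHP : ∀ᶠ z in linf, z ∈ UHP :=
  (Filter.tendsto_comap (f := Complex.im)).eventually (Filter.eventually_gt_atTop (0 : ℝ))

instance linf_neBot : linf.NeBot := by
  apply Filter.comap_neBot
  intro t ht
  obtain ⟨x, hx⟩ := Filter.nonempty_of_mem ht
  exact ⟨⟨0, x⟩, hx⟩

lemma cauchy0 {h : ℂ → ℂ} (hh : DifferentiableOn ℂ h UHP) {c : ℂ}
    (ht : Tendsto h linf (𝓝 c)) : Tendsto (deriv h) linf (𝓝 0) := by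
  rw [tendsto_linf] at ht ⊢
  intro ε hε
  obtain ⟨Y, hY⟩ := ht (ε / 2) (by positivity)
  refine ⟨max Y 0 + 2, fun z hz => ?_⟩
  have him : ∀ w ∈ Metric.closedBall z 1, max Y 0 < w.im := by
    intro w hw
    rw [Metric.mem_closedBall, dist_eq_norm] at hw
    have := (Complex.abs_im_le_norm (w - z)).trans hw
    rw [abs_le, Complex.sub_im] at this
    linarith
  have hd : DifferentiableOn ℂ (fun w => h w - c) (Metric.closedBall z 1) := by
    intro w hw
    exact ((diffAt hh ((le_max_right Y 0).trans_lt (him w hw))).sub_const c).differentiableWithinAt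
  have hdc : DiffContOnCl ℂ (fun w => h w - c) (Metric.ball z 1) := by
    apply DifferentiableOn.diffContOnCl
    rwa [closure_ball z one_ne_zero]
  have := Complex.norm_deriv_le_of_forall_mem_sphere_norm_le (C := ε / 2) one_pos hdc
    (fun w hw => (hY w ((le_max_left Y 0).trans
      (him w (Metric.sphere_subset_closedBall hw)).le)).le)
  rw [deriv_sub_const] at this
  rw [sub_zero]
  linarith

lemma asymD {F : ℂ → ℂ} (hF : DifferentiableOn ℂ F UHP) {a c : ℂ}
    (ht : Tendsto (fun z => Complex.exp (-(a * z)) * F z) linf (𝓝 c)) :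
    Tendsto (fun z => Complex.exp (-(a * z)) * deriv F z) linf (𝓝 (a * c)) := by
  have hE : ∀ z, HasDerivAt (fun z => Complex.exp (-(a * z))) (Complex.exp (-(a * z)) * (-a)) z := by
    intro z
    have := (((hasDerivAt_id z).const_mul a).neg).cexp
    simpa using this
  have hd : ∀ z ∈ UHP, HasDerivAt (fun z => Complex.exp (-(a * z)) * F z)
      (Complex.exp (-(a * z)) * (-a) * F z + Complex.exp (-(a * z)) * deriv F z) z :=
    fun z hz => (hE z).mul (diffAt hF hz).hasDerivAt
  have h0 := cauchy0 (fun z hz => (hd z hz).differentiableAt.differentiableWithinAt) ht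
  have := h0.add (ht.const_mul a)
  rw [zero_add] at this
  refine this.congr' ?_
  filter_upwards [linf_UHP] with z hz
  rw [(hd z hz).deriv]
  ring

lemma asymR {F : ℂ → ℂ} (hF : DifferentiableOn ℂ F UHP) {a c : ℂ} (hc : c ≠ 0)
    (ht : Tendsto (fun z => Complex.exp (-(a * z)) * F z) linf (𝓝 c)) :
    (∀ᶠ z in linf, F z ≠ 0) ∧ Tendsto (fun z => deriv F z / F z) linf (𝓝 a) ∧
      Tendsto (fun z => deriv (deriv F) z / F z) linf (𝓝 (a ^ 2)) := by
  have h1 := asymD hF ht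
  have h2 := asymD (diffDeriv hF) h1
  refine ⟨?_, ?_, ?_⟩
  · filter_upwards [ht.eventually_ne hc] with z hz h
    simp [h] at hz
  · have := h1.div ht hc
    rw [mul_div_cancel_right₀ _ hc] at this
    refine this.congr fun z => ?_
    simp only [Pi.div_apply]
    rw [mul_div_mul_left _ _ (Complex.exp_ne_zero _)]
  · have := h2.div ht hc
    rw [← mul_assoc, mul_div_cancel_right₀ _ hc, ← sq] at this
    refine this.congr fun z => ?_
    simp only [Pi.div_apply]
    rw [mul_div_mul_left _ _ (Complex.exp_ne_zero _)]

lemma exp_zero {N t : ℝ} (hN : 0 < N) (ht : 0 < t) :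
    Tendsto (fun z : ℂ => Complex.exp (2 * Real.pi * Complex.I * t / N * z)) linf (𝓝 0) := by
  rw [tendsto_zero_iff_norm_tendsto_zero]
  have : ∀ z : ℂ, ‖Complex.exp (2 * Real.pi * Complex.I * t / N * z)‖ =
      Real.exp (-(2 * Real.pi * t / N * z.im)) := by
    intro z
    rw [Complex.norm_exp]
    congr 1
    have : (2 * Real.pi * Complex.I * t / N * z : ℂ) =
        ((2 * Real.pi * t / N : ℝ) : ℂ) * (Complex.I * z) := by push_cast; ring
    rw [this, Complex.re_ofReal_mul]
    simp
  simp_rw [this]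
  refine Real.tendsto_exp_neg_atTop_nhds_zero.comp ?_
  exact (Filter.tendsto_comap (f := Complex.im)).const_mul_atTop (by positivity)

lemma logd {h : ℂ → ℂ} {z₀ : ℂ} (hh : AnalyticAt ℂ h z₀) (hne : ∀ᶠ z in 𝓝[≠] z₀, h z ≠ 0) :
    ∃ a : ℂ → ℂ, AnalyticAt ℂ a z₀ ∧ ∀ᶠ z in 𝓝[≠] z₀, deriv h z / h z = a z / (z - z₀) := by
  have hnz : ¬ ∀ᶠ z in 𝓝 z₀, h z = 0 := by
    intro h0
    have := (hne.and (h0.filter_mono nhdsWithin_le_nhds)).exists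
    obtain ⟨z, h1, h2⟩ := this
    exact h1 h2
  obtain ⟨n, g, hg, hg0, hgh⟩ := (hh.exists_eventuallyEq_pow_smul_nonzero_iff).2 hnz
  refine ⟨fun z => n + (z - z₀) * (deriv g z / g z), ?_, ?_⟩
  · have := hg.deriv
    fun_prop (disch := assumption)
  · have h1 : ∀ᶠ z in 𝓝 z₀, deriv h z = deriv (fun z => (z - z₀) ^ n • g z) z :=
      (EventuallyEq.deriv hgh)
    filter_upwards [h1.filter_mono nhdsWithin_le_nhds, hgh.filter_mono nhdsWithin_le_nhds,
      hg.eventually_analyticAt.filter_mono nhdsWithin_le_nhds,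
      (hg.continuousAt.eventually_ne hg0).filter_mono nhdsWithin_le_nhds,
      self_mem_nhdsWithin] with z e1 e2 e3 e4 e5
    have hz : z - z₀ ≠ 0 := sub_ne_zero.2 e5
    rw [e1, e2]
    have hd : HasDerivAt (fun z => (z - z₀) ^ n • g z)
        ((n * (z - z₀) ^ (n - 1) * 1) * g z + (z - z₀) ^ n * deriv g z) z :=
      (((hasDerivAt_id z).sub_const z₀).pow n).mul e3.differentiableAt.hasDerivAt
    rw [hd.deriv, smul_eq_mul]
    rcases n with _ | n
    · simp; field_simp
    · simp only [Nat.add_sub_cancel]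
      rw [pow_succ]
      field_simp

lemma logd2 {h : ℂ → ℂ} {z₀ : ℂ} (hh : AnalyticAt ℂ h z₀) (hne : ∀ᶠ z in 𝓝[≠] z₀, h z ≠ 0) :
    ∃ a : ℂ → ℂ, AnalyticAt ℂ a z₀ ∧
      ∀ᶠ z in 𝓝[≠] z₀, deriv (deriv h) z / h z = a z / (z - z₀) ^ 2 := by
  rcases hh.deriv.eventually_eq_zero_or_eventually_ne_zero with h0 | h0
  · refine ⟨fun _ => 0, analyticAt_const, ?_⟩
    have h1 : ∀ᶠ z in 𝓝 z₀, deriv (deriv h) z = deriv (fun _ => (0 : ℂ)) z :=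
      EventuallyEq.deriv h0
    filter_upwards [h1.filter_mono nhdsWithin_le_nhds] with z e
    simp [e]
  · obtain ⟨a, ha, ha'⟩ := logd hh hne
    obtain ⟨b, hb, hb'⟩ := logd hh.deriv h0
    refine ⟨fun z => a z * b z, ha.mul hb, ?_⟩
    filter_upwards [ha', hb', h0, self_mem_nhdsWithin] with z e1 e2 e3 e5
    have hz : z - z₀ ≠ 0 := sub_ne_zero.2 e5
    rw [← div_mul_div_cancel₀ e3, e1, e2]
    field_simp

lemma UHP_preconn : IsPreconnected UHP := (convex_halfSpace_im_gt 0).isPreconnected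

lemma gen_ne {h : ℂ → ℂ} (hh : DifferentiableOn ℂ h UHP) {w : ℂ} (hw : w ∈ UHP) (hw0 : h w ≠ 0)
    {z₀ : ℂ} (hz : z₀ ∈ UHP) : ∀ᶠ z in 𝓝[≠] z₀, h z ≠ 0 := by
  have ha : AnalyticOnNhd ℂ h UHP := hh.analyticOnNhd UHP_open
  rcases (ha z₀ hz).eventually_eq_zero_or_eventually_ne_zero with h0 | h0
  · exact absurd (ha.eqOn_zero_of_preconnected_of_eventuallyEq_zero UHP_preconn hz h0 hw) hw0
  · exact h0

/-- the globally defined version of `Q_f`. -/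
def Qglob (u v W : ℂ → ℂ) (z : ℂ) : ℂ :=
  -(1 / (4 * (Real.pi : ℂ) ^ 2)) *
    (-((deriv (deriv u) z * deriv v z - deriv u z * deriv (deriv v) z) / W z)
      + (3 / 4) * (deriv W z / W z) ^ 2 - (1 / 2) * (deriv (deriv W) z / W z))

lemma Wd {u v W : ℂ → ℂ} (hu : DifferentiableOn ℂ u UHP) (hv : DifferentiableOn ℂ v UHP)
    (hW : ∀ z ∈ UHP, W z = deriv u z * v z - u z * deriv v z) {z : ℂ} (hz : z ∈ UHP) :
    deriv W z = deriv (deriv u) z * v z - u z * deriv (deriv v) z := by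
  have h1 := (((diffAt (diffDeriv hu) hz).hasDerivAt.mul (diffAt hv hz).hasDerivAt)).sub
    ((diffAt hu hz).hasDerivAt.mul (diffAt (diffDeriv hv) hz).hasDerivAt)
  have h2 := h1.congr_of_eventuallyEq (f₁ := W)
    (by filter_upwards [UHP_open.mem_nhds hz] with w hw using hW w hw)
  rw [h2.deriv]
  ring

lemma Qglob_eq {u v W : ℂ → ℂ} (hu : DifferentiableOn ℂ u UHP) (hv : DifferentiableOn ℂ v UHP)
    (hW : ∀ z ∈ UHP, W z = deriv u z * v z - u z * deriv v z) {z : ℂ} (hz : z ∈ UHP)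
    (hu0 : u z ≠ 0) (hW0 : W z ≠ 0) : Qglob u v W z = Qformula u W z := by
  unfold Qglob Qformula
  congr 3
  have h1 := hW z hz
  have h2 := Wd hu hv hW hz
  field_simp
  rw [h1, h2]
  ring

lemma Qglob_mod (γ : SL2R) {u v W : ℂ → ℂ} (hu : DifferentiableOn ℂ u UHP)
    (hv : DifferentiableOn ℂ v UHP)
    (hW : ∀ z ∈ UHP, W z = deriv u z * v z - u z * deriv v z) (C : ℂ) (hC : C ≠ 0) (m : ℤ)
    (hut : ∀ z ∈ UHP, u (moeb γ z) = C * jfac γ z ^ m * ((γ.1 1 0 : ℂ) * v z + (γ.1 1 1 : ℂ) * u z))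
    (hvt : ∀ z ∈ UHP, v (moeb γ z) = C * jfac γ z ^ m * ((γ.1 0 0 : ℂ) * v z + (γ.1 0 1 : ℂ) * u z))
    {z : ℂ} (hz : z ∈ UHP) : Qglob u v W (moeb γ z) = jfac γ z ^ 4 * Qglob u v W z := by
  have hdet := det_c γ
  have hlin : ∀ p q : ℂ, DifferentiableOn ℂ (fun z => p * v z + q * u z) UHP := fun p q =>
    (hv.const_mul p).add (hu.const_mul q)
  have hl1 : ∀ p q : ℂ, ∀ z ∈ UHP, HasDerivAt (fun z => p * v z + q * u z)
      (p * deriv v z + q * deriv u z) z := fun p q z hz =>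
    ((diffAt hv hz).hasDerivAt.const_mul p).add ((diffAt hu hz).hasDerivAt.const_mul q)
  have hl1' : ∀ p q : ℂ, ∀ z ∈ UHP, deriv (fun z => p * v z + q * u z) z =
      (p * deriv v z + q * deriv u z) := fun p q z hz => (hl1 p q z hz).deriv
  have hl2 : ∀ p q : ℂ, ∀ z ∈ UHP, deriv (deriv (fun z => p * v z + q * u z)) z =
      p * deriv (deriv v) z + q * deriv (deriv u) z := by
    intro p q z hz
    have h := ((diffAt (diffDeriv hv) hz).hasDerivAt.const_mul p).add
      ((diffAt (diffDeriv hu) hz).hasDerivAt.const_mul q)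
    exact (h.congr_of_eventuallyEq (by
      filter_upwards [UHP_open.mem_nhds hz] with w hw using hl1' p q w hw)).deriv
  have hWd : DifferentiableOn ℂ W UHP :=
    (((diffDeriv hu).mul hv).sub (hu.mul (diffDeriv hv))).congr hW
  have hWt : ∀ z ∈ UHP, W (moeb γ z) = C ^ 2 * jfac γ z ^ (2 * (m + 1)) * W z := by
    intro z hz
    have hj := jfac_ne γ hz
    rw [hW _ (moeb_mem γ hz), hW z hz, tr1 γ C m hu (hlin _ _) hut hz,
      tr1 γ C m hv (hlin _ _) hvt hz, hl1' _ _ z hz, hl1' _ _ z hz, hut z hz, hvt z hz,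
      mul_comm 2 (m + 1), _root_.zpow_mul, zpow_add_one₀ hj, zpow_ofNat]
    linear_combination C ^ 2 * (jfac γ z ^ m) ^ 2 * jfac γ z ^ 2 *
      (deriv u z * v z - u z * deriv v z) * hdet
  have hj := jfac_ne γ hz
  have e1 := tr1 γ C m hu (hlin _ _) hut hz
  have e2 := tr2 γ C m hu (hlin _ _) hut hz
  have e3 := tr1 γ C m hv (hlin _ _) hvt hz
  have e4 := tr2 γ C m hv (hlin _ _) hvt hz
  have e5 := tr1 γ (C ^ 2) (2 * (m + 1)) hWd hWd hWt hz
  have e6 := tr2 γ (C ^ 2) (2 * (m + 1)) hWd hWd hWt hz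
  have e0 := hWt z hz
  rw [hl1' _ _ z hz] at e1 e3 e2 e4
  rw [hl2 _ _ z hz] at e2 e4
  by_cases hW0 : W z = 0
  · simp [Qglob, e0, hW0]
  have hs : jfac γ z ^ m ≠ 0 := zpow_ne_zero _ hj
  have hp : jfac γ z ^ (2 * (m + 1)) = (jfac γ z ^ m) ^ 2 * jfac γ z ^ 2 := by
    rw [mul_comm 2 (m + 1), _root_.zpow_mul, zpow_add_one₀ hj, zpow_ofNat, mul_pow]
  rw [hp] at e0 e5 e6
  have w0 := hW z hz
  have w1 := Wd hu hv hW hz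
  have hB : deriv (deriv u) (moeb γ z) * deriv v (moeb γ z) -
      deriv u (moeb γ z) * deriv (deriv v) (moeb γ z) =
      C ^ 2 * (jfac γ z ^ m) ^ 2 * jfac γ z ^ 6 *
        ((deriv (deriv u) z * deriv v z - deriv u z * deriv (deriv v) z)
          + m * ((γ.1 1 0 : ℂ) / jfac γ z) * deriv W z
          + m * (m + 1) * ((γ.1 1 0 : ℂ) / jfac γ z) ^ 2 * W z) := by
    rw [e1, e2, e3, e4, w0, w1]
    generalize (γ.1 1 0 : ℂ) / jfac γ z = J
    linear_combination C ^ 2 * (jfac γ z ^ m) ^ 2 * jfac γ z ^ 6 *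
        ((deriv (deriv u) z * deriv v z - deriv u z * deriv (deriv v) z)
          + m * J * (deriv (deriv u) z * v z - u z * deriv (deriv v) z)
          + m * (m + 1) * J ^ 2 * (deriv u z * v z - u z * deriv v z)) * hdet
  unfold Qglob
  rw [hB, e0, e5, e6]
  push_cast
  generalize (γ.1 1 0 : ℂ) / jfac γ z = J
  generalize jfac γ z ^ m = s at *
  field_simp
  ring

lemma Qform_pole {u W : ℂ → ℂ} {z₀ : ℂ} (hu : AnalyticAt ℂ u z₀) (hW : AnalyticAt ℂ W z₀)
    (hu0 : ∀ᶠ z in 𝓝[≠] z₀, u z ≠ 0) (hW0 : ∀ᶠ z in 𝓝[≠] z₀, W z ≠ 0) :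
    ∃ g : ℂ → ℂ, AnalyticAt ℂ g z₀ ∧
        ∀ᶠ z in 𝓝[≠] z₀, Qformula u W z = g z / (z - z₀) ^ 2 := by
  obtain ⟨a, ha, ha'⟩ := logd hu hu0
  obtain ⟨b, hb, hb'⟩ := logd hW hW0
  obtain ⟨a2, ha2, ha2'⟩ := logd2 hu hu0
  obtain ⟨b2, hb2, hb2'⟩ := logd2 hW hW0
  refine ⟨fun z => -(1 / (4 * (Real.pi : ℂ) ^ 2)) *
    (a2 z - a z * b z + (3 / 4) * (b z) ^ 2 - (1 / 2) * b2 z), by fun_prop, ?_⟩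
  filter_upwards [ha', hb', ha2', hb2', self_mem_nhdsWithin] with z e1 e2 e3 e4 e5
  have hz : z - z₀ ≠ 0 := sub_ne_zero.2 e5
  unfold Qformula
  rw [e1, e2, e3, e4]
  field_simp

lemma vord_iff {N : ℝ} {f : ℂ → ℂ} {ν : ℝ} (h : VOrder N f ν) : ∃ c : ℂ, c ≠ 0 ∧
    Tendsto (fun z => Complex.exp (-((2 * Real.pi * Complex.I / N) * ν * z)) * f z)
      linf (𝓝 c) := by
  obtain ⟨c, hc, h⟩ := h
  refine ⟨c, hc, ?_⟩
  rw [tendsto_linf]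
  convert h using 11
  ring

lemma linf_shift (N : ℝ) : Tendsto (fun z : ℂ => z + N) linf linf := by
  rw [linf, Filter.tendsto_comap_iff]
  refine (Filter.tendsto_comap (f := Complex.im)).congr fun z => ?_
  simp

lemma vord_mult {N : ℝ} (hN : 0 < N) {f : ℂ → ℂ} {ν : ℝ} {c x : ℂ} (hc : c ≠ 0)
    (h : Tendsto (fun z => Complex.exp (-((2 * Real.pi * Complex.I / N) * ν * z)) * f z)
      linf (𝓝 c)) (hx : ∀ z ∈ UHP, f (z + N) = x * f z) :
    Complex.exp (2 * Real.pi * Complex.I * ν) = x := by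
  have h1 := h.comp (linf_shift N)
  have h2 := h.const_mul (Complex.exp (-(2 * Real.pi * Complex.I * ν)) * x)
  have hNc : (N : ℂ) ≠ 0 := by exact_mod_cast hN.ne'
  have h3 := tendsto_nhds_unique (h1.congr' ?_) h2
  · have h4 : Complex.exp (-(2 * Real.pi * Complex.I * ν)) * x = 1 := by
      apply mul_right_cancel₀ hc
      rw [one_mul, ← h3]
    rw [Complex.exp_neg] at h4
    field_simp [Complex.exp_ne_zero] at h4
    exact h4.symm
  · filter_upwards [linf_UHP] with z hz
    simp only [Function.comp]
    rw [hx z hz]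
    have : -((2 * Real.pi * Complex.I / N) * ν * (z + N)) =
        -(2 * Real.pi * Complex.I * ν) + -((2 * Real.pi * Complex.I / N) * ν * z) := by
      field_simp
      ring
    rw [this, Complex.exp_add]
    ring

/-- asymptotics of `W`. -/
lemma W_asym {N : ℝ} (hN : 0 < N) {f f₁ W : ℂ → ℂ} {α : ℂ} (hα : α ≠ 0)
    (hfd : DifferentiableOn ℂ f UHP) (hf₁d : DifferentiableOn ℂ f₁ UHP)
    (hW : ∀ z, W z = -(f z) ^ 2 + α * (f₁ z * deriv f z - deriv f₁ z * f z))
    {ν μ : ℝ} {c d : ℂ} (hc : c ≠ 0) (hd : d ≠ 0)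
    (h : Tendsto (fun z => Complex.exp (-((2 * Real.pi * Complex.I / N) * ν * z)) * f z)
      linf (𝓝 c))
    (h₁ : Tendsto (fun z => Complex.exp (-((2 * Real.pi * Complex.I / N) * μ * z)) * f₁ z)
      linf (𝓝 d)) :
    ∃ e : ℂ, e ≠ 0 ∧ Tendsto (fun z => Complex.exp (-((2 * Real.pi * Complex.I / N) *
      (ν + min ν μ : ℝ) * z)) * W z) linf (𝓝 e) := by
  have hNc : (N : ℂ) ≠ 0 := by exact_mod_cast hN.ne'
  have hpi : (Real.pi : ℂ) ≠ 0 := by exact_mod_cast Real.pi_ne_zero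
  set A : ℂ := 2 * Real.pi * Complex.I / N with hA
  have hA0 : A ≠ 0 := by
    rw [hA]; simp [hNc, hpi]
  have hD := asymD hfd h
  have hD₁ := asymD hf₁d h₁
  have hX := h.pow 2
  have hY := (((h₁.mul hD).sub (hD₁.mul h)).const_mul α)
  have hE : ∀ a b z : ℂ, Complex.exp (-(A * (a + b) * z)) =
      Complex.exp (-(A * a * z)) * Complex.exp (-(A * b * z)) := by
    intro a b z; rw [← Complex.exp_add]; congr 1; ring
  have hE' : ∀ a b z : ℂ, Complex.exp (-(A * a * z)) =
      Complex.exp (A * (b - a) * z) * Complex.exp (-(A * b * z)) := by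
    intro a b z; rw [← Complex.exp_add]; congr 1; ring
  have hz0 : ∀ a b : ℝ, a < b → Tendsto (fun z => Complex.exp (A * (b - a) * z)) linf (𝓝 0) := by
    intro a b hab
    have := exp_zero (N := N) hN (sub_pos.2 hab)
    refine this.congr fun z => ?_
    rw [hA]; push_cast; congr 1; ring
  rcases lt_trichotomy ν μ with hlt | heq | hgt
  · refine ⟨-c ^ 2, by simp [hc], ?_⟩
    rw [min_eq_left hlt.le]
    have := hX.neg.add ((hz0 _ _ hlt).mul hY)
    rw [zero_mul, add_zero] at this
    refine this.congr fun z => ?_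
    push_cast
    rw [hW z, hE, hE' ν μ z]
    ring
  · subst heq
    refine ⟨-c ^ 2, by simp [hc], ?_⟩
    rw [min_self]
    have := hX.neg.add hY
    rw [show -c ^ 2 + α * (d * (A * ν * c) - A * ν * d * c) = -c ^ 2 by ring] at this
    refine this.congr fun z => ?_
    push_cast
    rw [hW z, hE]
    ring
  · refine ⟨α * (d * (A * ν * c) - A * μ * d * c), ?_, ?_⟩
    · rw [show α * (d * (A * ν * c) - A * μ * d * c) = α * A * c * d * ((ν - μ : ℝ) : ℂ) by
        push_cast; ring]
      have : ((ν - μ : ℝ) : ℂ) ≠ 0 := by exact_mod_cast (sub_pos.2 hgt).ne'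
      exact mul_ne_zero (mul_ne_zero (mul_ne_zero (mul_ne_zero hα hA0) hc) hd) this
    rw [min_eq_right hgt.le]
    have := ((hz0 _ _ hgt).mul hX.neg).add hY
    rw [zero_mul, zero_add] at this
    refine this.congr fun z => ?_
    push_cast
    rw [hW z, hE, hE' μ ν z]
    ring

/-- Theorem: `Q_f` is a meromorphic modular form of weight 4, with
poles of order ≤ 2, holomorphic at `∞` with value `κ∞²/N²`. -/
theorem Qf_meromorphic_modular_weight_four
    (Γ : Subgroup SL2R) (hcomm : Subgroup.Commensurable SL2ZR Γ)
    (N : ℝ) (hwidth : HasWidth Γ N)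
    (χ : SL2R → ℂ) (hχ : IsCharacter Γ χ)
    (φ : ℂ → ℂ) (hφholo : DifferentiableOn ℂ φ UHP)
    (hφper : ∀ z ∈ UHP, φ (z + N) = φ z)
    (hφbdd : ∃ C : ℝ, ∀ z ∈ UHP, 1 ≤ z.im → ‖φ z‖ ≤ C)
    (α : ℂ) (hα : α ≠ 0) (hφqm : IsQuasiWt2 Γ α φ)
    (k : ℤ)
    (f₀ f₁ : ℂ → ℂ)
    (hf₀ : IsModularForm Γ χ k f₀)
    (hf₁ : IsModularForm Γ χ (k - 2) f₁)
    (hf₁ne : ∃ z ∈ UHP, f₁ z ≠ 0)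
    (f W : ℂ → ℂ)
    (hf : ∀ z, f z = f₀ z + φ z * f₁ z)
    (hW : ∀ z, W z = -(f z) ^ 2 + α * (f₁ z * deriv f z - deriv f₁ z * f z))
    (νf νf₁ : ℝ) (hνf : VOrder N f νf) (hνf₁ : VOrder N f₁ νf₁)
    (κ : ℝ) (hκ : κ = (νf - min νf νf₁) / 2) :
    ∃ Q : ℂ → ℂ,
      -- `Q` agrees with `Q_f` away from the zeros of `f·W_f`
      (∀ z ∈ UHP, f z ≠ 0 → W z ≠ 0 → Q z = Qformula f W z) ∧
      -- (i) `Q` is meromorphic on `ℍ` with all poles of order at most 2 ...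
      (∀ z₀ ∈ UHP, ∃ g : ℂ → ℂ, AnalyticAt ℂ g z₀ ∧
        ∀ᶠ z in 𝓝[≠] z₀, Q z = g z / (z - z₀) ^ 2) ∧
      -- ... and is a meromorphic modular form of weight 4 with trivial character on `Γ`
      (∀ γ ∈ Γ, ∀ z ∈ UHP, Q (moeb γ z) = jfac γ z ^ 4 * Q z) ∧
      -- (ii) `Q` is holomorphic at `∞` and `N²·lim_{Im z → ∞} Q(z) = κ∞²`
      (∀ ε : ℝ, 0 < ε → ∃ Y : ℝ, ∀ z ∈ UHP, Y ≤ z.im →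
        ‖Q z - ((κ ^ 2 / N ^ 2 : ℝ) : ℂ)‖ < ε) ∧
      -- in particular `2κ∞` is a nonnegative integer
      (0 ≤ κ ∧ ∃ m : ℤ, (m : ℝ) = 2 * κ) := by
  obtain ⟨hN, hT, -⟩ := hwidth
  have hNc : (N : ℂ) ≠ 0 := by exact_mod_cast hN.ne'
  have hpi : (Real.pi : ℂ) ≠ 0 := by exact_mod_cast Real.pi_ne_zero
  have hχ0 : ∀ γ ∈ Γ, χ γ ≠ 0 := by
    intro γ hγ h0
    obtain ⟨-, n, hn, h⟩ := hχ
    have := h γ hγ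
    rw [h0, zero_pow hn.ne'] at this
    exact zero_ne_one this
  have hf₁d := hf₁.holo
  have hfd : DifferentiableOn ℂ f UHP :=
    (hf₀.holo.add (hφholo.mul hf₁d)).congr fun z _ => hf z
  set v : ℂ → ℂ := fun z => z * f z + α * f₁ z with hv
  have hvd : DifferentiableOn ℂ v UHP :=
    (differentiableOn_id.mul hfd).add (hf₁d.const_mul α)
  have hWv : ∀ z ∈ UHP, W z = deriv f z * v z - f z * deriv v z := by
    intro z hz
    have h1 : HasDerivAt v (1 * f z + z * deriv f z + α * deriv f₁ z) z :=
      ((hasDerivAt_id z).mul (diffAt hfd hz).hasDerivAt).add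
        ((diffAt hf₁d hz).hasDerivAt.const_mul α)
    rw [hW z, h1.deriv, hv]
    ring
  have hWd : DifferentiableOn ℂ W UHP :=
    (((diffDeriv hfd).mul hvd).sub (hfd.mul (diffDeriv hvd))).congr hWv
  -- transformation laws
  have hft : ∀ γ ∈ Γ, ∀ z ∈ UHP, f (moeb γ z) =
      χ γ * jfac γ z ^ (k - 1) * ((γ.1 1 0 : ℂ) * v z + (γ.1 1 1 : ℂ) * f z) := by
    intro γ hγ z hz
    have hj := jfac_ne γ hz
    have e1 := hφqm γ hγ z hz
    have e2 : φ (moeb γ z) = jfac γ z ^ 2 * (φ z + α * (γ.1 1 0 : ℂ) / jfac γ z) := by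
      rw [← e1]; field_simp
    have e3 : (γ.1 1 0 : ℂ) * v z + (γ.1 1 1 : ℂ) * f z =
        jfac γ z * f z + α * (γ.1 1 0 : ℂ) * f₁ z := by
      rw [hv]; unfold jfac; ring
    rw [e3, hf (moeb γ z), hf z, e2, hf₀.transform γ hγ z hz, hf₁.transform γ hγ z hz,
      show k - 1 = (k - 2) + 1 by ring, zpow_add_one₀ hj,
      show jfac γ z ^ k = jfac γ z ^ (k - 2) * jfac γ z ^ 2 by
        rw [← zpow_natCast (jfac γ z) 2, ← zpow_add₀ hj]; congr 1; norm_num]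
    field_simp
    ring
  have hvt : ∀ γ ∈ Γ, ∀ z ∈ UHP, v (moeb γ z) =
      χ γ * jfac γ z ^ (k - 1) * ((γ.1 0 0 : ℂ) * v z + (γ.1 0 1 : ℂ) * f z) := by
    intro γ hγ z hz
    have hj := jfac_ne γ hz
    have hdet := det_c γ
    have e1 : v (moeb γ z) = moeb γ z * f (moeb γ z) + α * f₁ (moeb γ z) := rfl
    have e4 : moeb γ z = ((γ.1 0 0 : ℂ) * z + (γ.1 0 1 : ℂ)) / jfac γ z := rfl
    rw [e1, hft γ hγ z hz, hf₁.transform γ hγ z hz,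
      show k - 1 = (k - 2) + 1 by ring, zpow_add_one₀ hj, e4, hv]
    field_simp
    simp only [jfac]
    linear_combination (-χ γ * α * f₁ z) * hdet
  -- asymptotics
  obtain ⟨c, hc, hca⟩ := vord_iff hνf
  obtain ⟨d, hd, hda⟩ := vord_iff hνf₁
  obtain ⟨e, he, hea⟩ := W_asym hN hα hfd hf₁d hW hc hd hca hda
  obtain ⟨f0, f1, f2⟩ := asymR hfd hc hca
  obtain ⟨W0, W1, W2⟩ := asymR hWd he hea
  obtain ⟨wf, hwf, hwfU⟩ := (f0.and linf_UHP).exists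
  obtain ⟨wW, hwW, hwWU⟩ := (W0.and linf_UHP).exists
  refine ⟨Qglob f v W, fun z hz h1 h2 => Qglob_eq hfd hvd hWv hz h1 h2, ?_, ?_, ?_, ?_⟩
  · intro z₀ hz₀
    have g1 := gen_ne hfd hwfU hwf hz₀
    have g2 := gen_ne hWd hwWU hwW hz₀
    obtain ⟨g, hg, hg'⟩ := Qform_pole (hfd.analyticAt (UHP_open.mem_nhds hz₀))
      (hWd.analyticAt (UHP_open.mem_nhds hz₀)) g1 g2
    refine ⟨g, hg, ?_⟩
    filter_upwards [g1, g2, hg', mem_nhdsWithin_of_mem_nhds (UHP_open.mem_nhds hz₀)]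
      with z a1 a2 a3 a4
    rw [Qglob_eq hfd hvd hWv a4 a1 a2, a3]
  · intro γ hγ z hz
    exact Qglob_mod γ hfd hvd hWv (χ γ) (hχ0 γ hγ) (k - 1) (hft γ hγ) (hvt γ hγ) hz
  · have hlim := (((f2.sub (f1.mul W1)).add ((W1.pow 2).const_mul (3 / 4))).sub
      (W2.const_mul (1 / 2))).const_mul (-(1 / (4 * (Real.pi : ℂ) ^ 2)))
    have hlim2 : Tendsto (Qglob f v W) linf (𝓝 ((κ ^ 2 / N ^ 2 : ℝ) : ℂ)) := by
      have hval : ∀ x y : ℂ, x = y → Tendsto (Qglob f v W) linf (𝓝 x) →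
          Tendsto (Qglob f v W) linf (𝓝 y) := fun x y h => h ▸ id
      refine hval _ _ ?_ (hlim.congr' ?_)
      rotate_left
      · filter_upwards [f0, W0, linf_UHP] with z a1 a2 a3
        rw [Qglob_eq hfd hvd hWv a3 a1 a2]
        rfl
      · rw [hκ]
        push_cast
        field_simp
        rw [Complex.I_sq]
        ring
    rw [tendsto_linf] at hlim2
    intro ε hε
    obtain ⟨Y, hY⟩ := hlim2 ε hε
    exact ⟨Y, fun z _ h => hY z h⟩
  · have hmo : ∀ z, moeb (upperTri N) z = z + N := by
      intro z; simp [moeb, upperTri]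
    have hjf : ∀ z, jfac (upperTri N) z = 1 := by
      intro z; simp [jfac, upperTri]
    have p1 : ∀ z ∈ UHP, f₁ (z + N) = χ (upperTri N) * f₁ z := by
      intro z hz
      have := hf₁.transform _ hT z hz
      rw [hmo, hjf] at this
      simpa using this
    have p0 : ∀ z ∈ UHP, f (z + N) = χ (upperTri N) * f z := by
      intro z hz
      have := hf₀.transform _ hT z hz
      rw [hmo, hjf] at this
      rw [hf, hf, p1 z hz, hφper z hz, this]
      simp
      ring
    have q0 := vord_mult hN hc hca p0
    have q1 := vord_mult hN hd hda p1
    rcases le_total νf νf₁ with hle | hle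
    · rw [min_eq_left hle] at hκ
      refine ⟨by simp [hκ], 0, by simp [hκ]⟩
    · rw [min_eq_right hle] at hκ
      refine ⟨by rw [hκ]; linarith, ?_⟩
      obtain ⟨m, hm⟩ := Complex.exp_eq_exp_iff_exists_int.1 (q0.trans q1.symm)
      refine ⟨m, ?_⟩
      have h2 : (2 * Real.pi * Complex.I : ℂ) ≠ 0 := Complex.two_pi_I_ne_zero
      have h3 : (νf : ℂ) = νf₁ + m := by
        apply mul_left_cancel₀ h2
        rw [hm]; ring
      have h4 : νf = νf₁ + m := by exact_mod_cast h3
      rw [hκ, h4]; ring
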